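/- Let m ≥ 0, n ≥ 1, k ≥ 0 be integers. Then, as an identity of polynomials in z, z^{k(k+1)/2} · T_{m,n}^{(−2n−k−1/2)}(z²/2) = b_{k,m,n} · Wr(He_1, He_3, …, He_{2(n+k)−1}, He_{2(m+1)}, He_{2(m+2)}, …, He_{2(m+n)})(z), where the Wronskian is taken of the n+k probabilists' Hermite polynomials of odd degrees 1, 3, …, 2(n+k)−1 followed by the n of even degrees 2(m+1), …, 2(m+n), and b_{k,m,n} = 2^{−n(m+1)} c_{m,n} / Δ(h), with c_{m,n} = (−1)^{n(2m+1+n)/2} ∏_{j=1}^{n} (j−1)!/(m+j)! and Δ(h) = ∏_{1≤i<j≤r}(h_j − h_i) the Vandermonde product of the list h = (1, 3, …, 2(n+k)−1, 2(m+1), 2(m+2), …, 2(m+n)) in that order. -/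

import Mathlib

noncomputable section

open Finset

/-- Generalized binomial coefficient `C(x, k)` for real `x`. -/
def genBinom (x : ℝ) (k : ℕ) : ℝ :=
  (∏ i ∈ Finset.range k, (x - i)) / (Nat.factorial k)

/-- Associated Laguerre polynomial `L_n^{(α)}(z)`, with the convention `L_n^{(α)} = 0` for `n < 0`. -/
def lagL (n : ℤ) (α : ℝ) : ℝ → ℝ := fun z =>
  if n < 0 then 0
  else ∑ k ∈ Finset.range (n.toNat + 1),
    (-1 : ℝ) ^ k * genBinom ((n : ℝ) + α) (n.toNat - k) * z ^ k / (Nat.factorial k)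

/-- Generalised Laguerre polynomial
`T_{m,n}^{(μ)}(z) = det[(d/dz)^{j+k} L_{m+n}^{(μ+1)}(z)]_{j,k=0}^{n-1}`
(with `T_{m,0}^{(μ)} = 1`, the empty determinant). -/
def genLag (m : ℤ) (n : ℕ) (μ : ℝ) : ℝ → ℝ := fun z =>
  Matrix.det (Matrix.of fun j k : Fin n =>
    iteratedDeriv ((j : ℕ) + (k : ℕ)) (lagL (m + n) (μ + 1)) z)

/-- Wronskian `Wr(f_1, …, f_r)(z) = det[(d/dz)^{j-1} f_k(z)]`. -/
def wronskian {r : ℕ} (f : Fin r → ℝ → ℝ) : ℝ → ℝ := fun z =>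
  Matrix.det (Matrix.of fun j k : Fin r => iteratedDeriv (j : ℕ) (f k) z)

/-- The constant `c_{m,n} = (-1)^{n(2m+1+n)/2} ∏_{j=1}^n (j-1)!/(m+j)!`. -/
def cmn (m n : ℕ) : ℝ :=
  (-1 : ℝ) ^ (n * (2 * m + 1 + n) / 2) *
    ∏ j ∈ Finset.range n, (Nat.factorial j : ℝ) / (Nat.factorial (m + j + 1))

/-- `τ_{m,n}^{(μ)}(z) = det[(z d/dz)^{j+k} L_{m+n}^{(n+μ)}(z)]_{j,k=0}^{n-1}`. -/
def tauP (m : ℤ) (n : ℕ) (μ : ℝ) : ℝ → ℝ := fun z =>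
  Matrix.det (Matrix.of fun j k : Fin n =>
    ((fun (g : ℝ → ℝ) => fun t => t * deriv g t)^[(j : ℕ) + (k : ℕ)]
      (lagL (m + n) ((n : ℝ) + μ))) z)

/-- Hirota bilinear operator `D_z(f • g) = f' g - f g'`. -/
def hirota (f g : ℝ → ℝ) (z : ℝ) : ℝ := deriv f z * g z - f z * deriv g z

/-- Probabilists' Hermite polynomial `He_n` as a real function. -/
def He (n : ℕ) : ℝ → ℝ := fun z => Polynomial.aeval z (Polynomial.hermite n)

/-- The fifth Painlevé equation (with `δ = -1/2`) for `w` with parameters `(a, b, c)`,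
holding at the point `z`. -/
def PV (a b c : ℝ) (w : ℝ → ℝ) (z : ℝ) : Prop :=
  iteratedDeriv 2 w z =
    (1 / (2 * w z) + 1 / (w z - 1)) * (deriv w z) ^ 2
      - (1 / z) * deriv w z
      + (w z - 1) ^ 2 * (a * (w z) ^ 2 + b) / (z ^ 2 * w z)
      + c * w z / z
      - w z * (w z + 1) / (2 * (w z - 1))

/-- The Jimbo–Miwa–Okamoto `σ`-equation `S_V` with parameters `(ν₁, ν₂, ν₃)`,
holding at the point `z`. -/
def SV (ν₁ ν₂ ν₃ : ℝ) (σ : ℝ → ℝ) (z : ℝ) : Prop :=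
  (z * iteratedDeriv 2 σ z) ^ 2 =
    (2 * (deriv σ z) ^ 2 + (ν₁ + ν₂ + ν₃ - z) * deriv σ z + σ z) ^ 2
      - 4 * deriv σ z * (deriv σ z + ν₁) * (deriv σ z + ν₂) * (deriv σ z + ν₃)

/-!
Multiplying row `j` of a Wronskian by `z ^ j` turns it into a determinant of polynomials in the
Euler operator `z d/dz`, and any monic polynomials of degrees `0, 1, 2, …` in that operator give the
same determinant. Choosing those with nodes `1, 3, …, 2M - 1, 0, 2, 4, …`, where `M = n + k`, makes
the determinant block triangular: the odd Hermite polynomials are sums of odd powers of `z`, which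
are eigenvectors with odd eigenvalues, and are annihilated. On the even ones,
`He_{2p}(z) = (-2)^p p! L_p^{(-1/2)}(z²/2)`, each odd node lowers the Laguerre parameter by one and
the even nodes produce derivatives in `z²/2`, so the remaining block is a Wronskian of Laguerre
polynomials `L_p^{(-1/2-M)}`. By the contiguity relations this is the Hankel determinant
defining `T_{m,n}`.
-/

section Determinants

open Polynomial

variable {R A G : Type*} [CommRing R] [CommRing A] [Algebra R A] [AddCommGroup G]

/-- Passing from the basis `1, X, X², …` to monic polynomials of the same degrees is a
unitriangular operation on the rows. -/
lemma det_linearMap_monic {r : ℕ} (φ : Fin r → R[X] →ₗ[R] A) (p : Fin r → R[X])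
    (hdeg : ∀ i, (p i).natDegree = i) (hmonic : ∀ i, (p i).Monic) :
    (Matrix.of fun i j : Fin r => φ j (p i)).det
      = (Matrix.of fun i j : Fin r => φ j (X ^ (i : ℕ))).det := by
  set P : Matrix (Fin r) (Fin r) R := Matrix.of fun i j => (p j).coeff i
  have hmul : (Matrix.of fun i j => φ j (p i))
      = P.transpose.map (algebraMap R A) * Matrix.of fun i j : Fin r => φ j (X ^ (i : ℕ)) := by
    ext i j
    have hp : p i = ∑ l : Fin r, (p i).coeff l • X ^ (l : ℕ) := by
      rw [Fin.sum_univ_eq_sum_range fun l => (p i).coeff l • (X : R[X]) ^ l]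
      simpa only [smul_X_eq_monomial] using (p i).as_sum_range' r (hdeg i ▸ i.isLt)
    rw [Matrix.of_apply, hp, map_sum, Matrix.mul_apply]
    simp only [P, map_smul, Matrix.map_apply, Matrix.transpose_apply, Matrix.of_apply]
    simp only [Algebra.smul_def]
  rw [hmul, Matrix.det_mul, ← RingHom.mapMatrix_apply, ← RingHom.map_det, Matrix.det_transpose,
    Matrix.det_matrixOfPolynomials p hdeg hmonic, map_one, one_mul]

lemma det_addMonoidHom_fwdDiff_iter {r : ℕ} (φ : Fin r → G →+ A) (f : ℕ → G) (b : ℕ) :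
    (Matrix.of fun i j : Fin r => φ j ((fwdDiff 1)^[i] f b)).det
      = (Matrix.of fun i j : Fin r => φ j (f (b + i))).det := by
  let Φ (j : Fin r) : ℤ[X] →ₗ[ℤ] A := (φ j).toIntLinearMap ∘ₗ LinearMap.proj b ∘ₗ
    LinearMap.applyₗ f ∘ₗ (aeval (fwdDiff_aux.fwdDiffₗ ℕ G 1)).toLinearMap
  have hdiff (i : ℕ) (j : Fin r) : Φ j (X ^ i) = φ j ((fwdDiff 1)^[i] f b) := by
    simp [Φ, ← fwdDiff_aux.coe_fwdDiffₗ_pow]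
  have hshift (i : ℕ) (j : Fin r) : Φ j ((X + C 1) ^ i) = φ j (f (b + i)) := by
    have := fwdDiff_aux.shiftₗ_pow_apply 1 f i b
    rw [fwdDiff_aux.shiftₗ, smul_eq_mul, mul_one] at this
    simp [Φ, this]
  simp only [← hdiff, ← hshift]
  exact (det_linearMap_monic Φ (fun i => (X + C 1) ^ (i : ℕ))
    (fun i => natDegree_pow_X_add_C _ _) fun i => (monic_X_add_C 1).pow _).symm

lemma det_eq_mul_of_natAdd_castAdd_eq_zero {m n : ℕ} (B : Matrix (Fin (m + n)) (Fin (m + n)) A)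
    (h : ∀ i j, B (Fin.natAdd m i) (Fin.castAdd n j) = 0) :
    B.det = (B.submatrix (Fin.castAdd n) (Fin.castAdd n)).det *
      (B.submatrix (Fin.natAdd m) (Fin.natAdd m)).det := by
  rw [← Matrix.det_submatrix_equiv_self finSumFinEquiv B,
    ← Matrix.fromBlocks_toBlocks (B.submatrix finSumFinEquiv finSumFinEquiv)]
  have hzero : (B.submatrix finSumFinEquiv finSumFinEquiv).toBlocks₂₁ = 0 := by
    ext i j
    exact h i j
  rw [hzero, Matrix.det_fromBlocks_zero₂₁]
  rfl

lemma sign_revPerm (n : ℕ) :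
    Equiv.Perm.sign (Fin.revPerm : Equiv.Perm (Fin n)) = ∏ i : Fin n, (-1) ^ (i : ℕ) := by
  rw [Equiv.Perm.sign_eq_prod_prod_Iio]
  refine Fintype.prod_congr _ _ fun i => ?_
  rw [← Fin.card_Iio, ← prod_const]
  refine prod_congr rfl fun j hj => if_neg ?_
  simpa using (mem_Iio.mp hj).le

lemma det_neg_one_pow_mul_rev {n : ℕ} (B : Matrix (Fin n) (Fin n) A) :
    (Matrix.of fun i j : Fin n => (-1) ^ (j : ℕ) * B i j.rev).det = B.det := by
  have hrev := Matrix.det_permute' Fin.revPerm B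
  rw [Matrix.det_mul_row (fun j : Fin n => (-1) ^ (j : ℕ)) fun i j => B i j.rev]
  rw [show (fun i j => B i j.rev) = B.submatrix id Fin.revPerm from rfl, hrev, sign_revPerm,
    ← mul_assoc]
  simp [← prod_mul_distrib, ← mul_pow]

lemma prod_filter_fst_lt_snd {M : Type*} [CommMonoid M] (N : ℕ) (f : ℕ → ℕ → M) :
    ∏ p ∈ univ.filter (fun p : Fin N × Fin N => p.1 < p.2), f p.1 p.2
      = ∏ j ∈ range N, ∏ i ∈ range j, f i j := by
  rw [prod_filter, Fintype.prod_prod_type_right,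
    ← Fin.prod_univ_eq_prod_range fun j => ∏ i ∈ range j, f i j]
  refine Fintype.prod_congr _ _ fun j => ?_
  rw [← prod_filter, filter_gt_eq_Iio, ← Nat.Iio_eq_range, ← Fin.map_valEmbedding_Iio, prod_map]
  rfl

end Determinants

section EulerDerivation

open Polynomial

/-- The determinant of the derivatives `f_k^{(j)}`: the Wronskian of a family of polynomials, as a
polynomial. -/
def polyWronskian {R : Type*} [CommRing R] {r : ℕ} (f : Fin r → R[X]) : R[X] :=
  (Matrix.of fun j k : Fin r => derivative^[j] (f k)).det

/-- The Euler operator `X d/dX`; polynomials in it act diagonally on monomials. -/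
def eulerDeriv (R : Type*) [CommRing R] : Module.End R R[X] :=
  LinearMap.mulLeft R X ∘ₗ derivative

variable {R : Type*} [CommRing R]

lemma eulerDeriv_apply (f : R[X]) : eulerDeriv R f = X * derivative f := rfl

lemma coeff_eulerDeriv (f : R[X]) (e : ℕ) : (eulerDeriv R f).coeff e = e * f.coeff e := by
  cases e with
  | zero => simp [eulerDeriv_apply]
  | succ e => simp [eulerDeriv_apply, coeff_X_mul, coeff_derivative, mul_comm]

lemma eulerDeriv_X_pow_mul (n : ℕ) (f : R[X]) :
    eulerDeriv R (X ^ n * f) = (n : R) • (X ^ n * f) + X ^ n * eulerDeriv R f := by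
  have hpow : X * derivative (X ^ n : R[X]) = (n : R[X]) * X ^ n := by
    cases n with
    | zero => simp
    | succ n =>
      rw [derivative_X_pow_succ]
      simp only [C_add, C_1, map_natCast]
      push_cast
      ring
  rw [eulerDeriv_apply, derivative_mul, mul_add, ← mul_assoc, hpow, Nat.cast_smul_eq_nsmul,
    nsmul_eq_mul, eulerDeriv_apply]
  ring

lemma coeff_aeval_eulerDeriv (q f : R[X]) (e : ℕ) :
    (aeval (eulerDeriv R) q f).coeff e = q.eval (e : R) * f.coeff e := by
  induction q using Polynomial.induction_on generalizing f with
  | C a => simp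
  | add p q hp hq => simp [hp, hq, add_mul]
  | monomial n a ih =>
    rw [pow_succ, ← mul_assoc, map_mul, aeval_X, Module.End.mul_apply, ih, coeff_eulerDeriv]
    simp [mul_assoc]

lemma aeval_eulerDeriv_descPochhammer (j : ℕ) (f : R[X]) :
    aeval (eulerDeriv R) (descPochhammer R j) f = X ^ j * derivative^[j] f := by
  ext e
  rw [coeff_aeval_eulerDeriv, descPochhammer_eval_eq_descFactorial, coeff_X_pow_mul']
  split_ifs with h
  · rw [coeff_iterate_derivative, Nat.sub_add_cancel h, nsmul_eq_mul]
  · rw [Nat.descFactorial_of_lt (not_le.mp h), Nat.cast_zero, zero_mul]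

lemma det_aeval_eulerDeriv [IsDomain R] {r : ℕ} (q : Fin r → R[X])
    (hdeg : ∀ j, (q j).natDegree = j) (hmonic : ∀ j, (q j).Monic) (f : Fin r → R[X]) :
    (Matrix.of fun j k => aeval (eulerDeriv R) (q j) (f k)).det
      = (∏ j : Fin r, X ^ (j : ℕ)) * polyWronskian f := by
  let φ (k : Fin r) : R[X] →ₗ[R] R[X] :=
    LinearMap.applyₗ (f k) ∘ₗ (aeval (eulerDeriv R)).toLinearMap
  calc (Matrix.of fun j k : Fin r => φ k (q j)).det
      = (Matrix.of fun j k : Fin r => φ k (descPochhammer R j)).det := by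
        rw [det_linearMap_monic φ q hdeg hmonic]
        exact (det_linearMap_monic φ (fun j => descPochhammer R j)
          (fun j => descPochhammer_natDegree R j) fun j => monic_descPochhammer R j).symm
    _ = (Matrix.of fun j k : Fin r => X ^ (j : ℕ) * derivative^[j] (f k)).det := by
        simp only [φ, LinearMap.comp_apply, LinearMap.applyₗ_apply_apply, AlgHom.toLinearMap_apply,
          aeval_eulerDeriv_descPochhammer]
    _ = (∏ j : Fin r, X ^ (j : ℕ)) * polyWronskian f :=
        Matrix.det_mul_column (fun j : Fin r => X ^ (j : ℕ)) fun j k => derivative^[j] (f k)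

/-- The substitution `g(X) ↦ g(X²/2)`. -/
def halfSq : ℝ[X] →ₐ[ℝ] ℝ[X] := aeval (C (1 / 2) * X ^ 2)

lemma eval_halfSq (g : ℝ[X]) (z : ℝ) : (halfSq g).eval z = g.eval (z ^ 2 / 2) := by
  rw [halfSq, ← comp_eq_aeval, eval_comp]
  simp [div_eq_inv_mul]

lemma halfSq_X : halfSq X = C (1 / 2) * X ^ 2 := aeval_X _

lemma derivative_halfSq (g : ℝ[X]) : derivative (halfSq g) = X * halfSq (derivative g) := by
  have hderiv : derivative (C (1 / 2 : ℝ) * X ^ 2) = X := by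
    rw [derivative_C_mul_X_pow]
    norm_num
  simp only [halfSq, ← comp_eq_aeval, derivative_comp, hderiv]

lemma X_sq_eq_two_smul_halfSq : (X : ℝ[X]) ^ 2 = halfSq ((2 : ℝ) • X) := by
  rw [map_smul, halfSq_X, ← C_mul', ← mul_assoc, ← C_mul]
  norm_num

lemma eulerDeriv_halfSq (g : ℝ[X]) :
    eulerDeriv ℝ (halfSq g) = halfSq ((2 : ℝ) • eulerDeriv ℝ g) := by
  rw [eulerDeriv_apply, eulerDeriv_apply, derivative_halfSq, ← mul_assoc, ← sq,
    X_sq_eq_two_smul_halfSq, ← map_mul, smul_mul_assoc]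

/-- `(X - 1)(X - 3)⋯(X - (2M - 1))`; as a polynomial in `X d/dX` it annihilates the odd powers
below `X ^ (2M)`. -/
def oddNodal (M : ℕ) : ℝ[X] := Lagrange.nodal (range M) fun l => 2 * (l : ℝ) + 1

/-- `X(X - 2)⋯(X - 2(j - 1))`; applied to `X d/dX` it becomes `X^{2j} (d/dw)^j` on functions of
`w = X²/2`. -/
def evenNodal (j : ℕ) : ℝ[X] := Lagrange.nodal (range j) fun l => 2 * (l : ℝ)

lemma aeval_eulerDeriv_nodal_range_succ (v : ℕ → R) (j : ℕ) (f : R[X]) :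
    aeval (eulerDeriv R) (Lagrange.nodal (range (j + 1)) v) f
      = eulerDeriv R (aeval (eulerDeriv R) (Lagrange.nodal (range j) v) f)
        - v j • aeval (eulerDeriv R) (Lagrange.nodal (range j) v) f := by
  rw [range_add_one, Lagrange.nodal_insert_eq_nodal notMem_range_self, map_mul,
    Module.End.mul_apply, map_sub, aeval_X, aeval_C, LinearMap.sub_apply,
    Module.algebraMap_end_apply]

lemma aeval_evenNodal_halfSq (j : ℕ) (g : ℝ[X]) :
    aeval (eulerDeriv ℝ) (evenNodal j) (halfSq g) = X ^ (2 * j) * halfSq (derivative^[j] g) := by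
  induction j with
  | zero => simp [evenNodal]
  | succ j ih =>
    rw [evenNodal, aeval_eulerDeriv_nodal_range_succ, ← evenNodal, ih, eulerDeriv_X_pow_mul,
      Nat.cast_mul, Nat.cast_ofNat, add_sub_cancel_left, eulerDeriv_apply, derivative_halfSq,
      Function.iterate_succ_apply']
    ring

end EulerDerivation

section Laguerre

open Polynomial

lemma add_one_mul_genBinom_succ (x : ℝ) (d : ℕ) :
    (d + 1) * genBinom x (d + 1) = (x - d) * genBinom x d := by
  rw [genBinom, genBinom, prod_range_succ, Nat.factorial_succ, Nat.cast_mul, Nat.cast_succ]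
  field_simp

lemma add_one_mul_genBinom_add_one_succ (x : ℝ) (d : ℕ) :
    (d + 1) * genBinom (x + 1) (d + 1) = (x + 1) * genBinom x d := by
  rw [genBinom, genBinom, prod_range_succ', Nat.factorial_succ, Nat.cast_mul, Nat.cast_succ]
  simp only [Nat.cast_succ, add_sub_add_right_eq_sub, Nat.cast_zero, sub_zero]
  field_simp

lemma genBinom_add_one_succ (x : ℝ) (d : ℕ) :
    genBinom (x + 1) (d + 1) = genBinom x (d + 1) + genBinom x d := by
  refine mul_left_cancel₀ (Nat.cast_add_one_ne_zero d : (d : ℝ) + 1 ≠ 0) ?_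
  linear_combination add_one_mul_genBinom_add_one_succ x d - add_one_mul_genBinom_succ x d

lemma genBinom_add_one_mul (x : ℝ) (d : ℕ) :
    (x + 1 - d) * genBinom (x + 1) d = (x + 1) * genBinom x d := by
  cases d with
  | zero => simp [genBinom]
  | succ d =>
    refine mul_left_cancel₀ (Nat.cast_add_one_ne_zero d : (d : ℝ) + 1 ≠ 0) ?_
    push_cast
    linear_combination (x - d) * add_one_mul_genBinom_add_one_succ x d
      - (x + 1) * add_one_mul_genBinom_succ x d

/-- The Laguerre polynomial `L_p^{(α)}` of nonnegative index, as an element of `ℝ[X]`. -/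
def laguerrePoly (p : ℕ) (α : ℝ) : ℝ[X] :=
  ∑ i ∈ range (p + 1), C ((-1) ^ i * genBinom (p + α) (p - i) / i.factorial) * X ^ i

lemma lagL_natCast (p : ℕ) (α : ℝ) : lagL p α = fun z => (laguerrePoly p α).eval z := by
  ext z
  simp only [lagL, laguerrePoly, eval_finsetSum, Int.natCast_nonneg, not_lt.mpr, if_false,
    Int.toNat_natCast, Int.cast_natCast, eval_mul, eval_C, eval_pow, eval_X]
  exact sum_congr rfl fun i _ => by ring

lemma coeff_laguerrePoly_of_lt {p i : ℕ} (h : p < i) (α : ℝ) : (laguerrePoly p α).coeff i = 0 := by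
  simp [laguerrePoly, coeff_X_pow, h.not_ge]

lemma coeff_laguerrePoly_add (i d : ℕ) (α : ℝ) :
    (laguerrePoly (i + d) α).coeff i = (-1) ^ i * genBinom (i + d + α) d / i.factorial := by
  simp [laguerrePoly, coeff_X_pow]

lemma derivative_laguerrePoly_succ (p : ℕ) (α : ℝ) :
    derivative (laguerrePoly (p + 1) α) = -laguerrePoly p (α + 1) := by
  ext i
  rw [coeff_derivative, coeff_neg]
  obtain h | ⟨d, rfl⟩ := (lt_or_ge p i).imp_right Nat.exists_eq_add_of_le
  · simp [coeff_laguerrePoly_of_lt h, coeff_laguerrePoly_of_lt (Nat.succ_lt_succ h)]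
  · rw [add_right_comm, coeff_laguerrePoly_add, coeff_laguerrePoly_add, Nat.factorial_succ]
    push_cast
    rw [show (i : ℝ) + 1 + d + α = i + d + (α + 1) by ring, pow_succ]
    field_simp

lemma iterate_derivative_laguerrePoly_add (p l : ℕ) (α : ℝ) :
    derivative^[l] (laguerrePoly (p + l) α) = (-1) ^ l * laguerrePoly p (α + l) := by
  induction l generalizing α with
  | zero => simp
  | succ l ih =>
    rw [Function.iterate_succ_apply, ← add_assoc, derivative_laguerrePoly_succ,
      iterate_derivative_neg, ih, Nat.cast_succ, add_right_comm α 1, ← add_assoc]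
    ring

lemma laguerrePoly_succ_sub (p : ℕ) (α : ℝ) :
    laguerrePoly (p + 1) (α + 1) - laguerrePoly p (α + 1) = laguerrePoly (p + 1) α := by
  ext i
  rw [coeff_sub]
  obtain h | ⟨d, hd⟩ := (lt_or_ge (p + 1) i).imp_right Nat.exists_eq_add_of_le
  · simp [coeff_laguerrePoly_of_lt h, coeff_laguerrePoly_of_lt ((Nat.lt_succ_self p).trans h)]
  cases d with
  | zero =>
    rw [add_zero] at hd
    subst hd
    have hlead (β : ℝ) := coeff_laguerrePoly_add (p + 1) 0 β
    simp only [add_zero] at hlead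
    simp [hlead, coeff_laguerrePoly_of_lt, genBinom]
  | succ d =>
    obtain rfl : p = i + d := Nat.succ_injective hd
    have hpascal := genBinom_add_one_succ (i + d + (α + 1)) d
    rw [add_assoc i, coeff_laguerrePoly_add, coeff_laguerrePoly_add, coeff_laguerrePoly_add]
    push_cast
    rw [show (i : ℝ) + (d + 1) + (α + 1) = i + d + (α + 1) + 1 by ring, hpascal]
    ring_nf

lemma fwdDiff_iter_laguerrePoly (s : ℕ) (β : ℝ) :
    (fwdDiff 1)^[s] (fun p => laguerrePoly p β) = fun p => laguerrePoly (p + s) (β - s) := by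
  induction s with
  | zero => simp
  | succ s ih =>
    ext1 p
    have hcontig := laguerrePoly_succ_sub (p + s) (β - (s + 1 : ℕ))
    rw [show β - (s + 1 : ℕ) + 1 = β - s by push_cast; ring] at hcontig
    rw [Function.iterate_succ_apply', ih, fwdDiff, add_right_comm, hcontig, add_assoc]

lemma laguerrePoly_sub_derivative (p : ℕ) (α : ℝ) :
    laguerrePoly p α - derivative (laguerrePoly p α) = laguerrePoly p (α + 1) := by
  cases p with
  | zero => simp [laguerrePoly, genBinom]
  | succ p =>
    rw [derivative_laguerrePoly_succ, ← laguerrePoly_succ_sub p α]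
    ring

lemma eulerDeriv_laguerrePoly_add (p : ℕ) (α : ℝ) :
    eulerDeriv ℝ (laguerrePoly p (α + 1)) + (α + 1) • laguerrePoly p (α + 1)
      = (p + α + 1) • laguerrePoly p α := by
  ext i
  rw [coeff_add, coeff_eulerDeriv, coeff_smul, coeff_smul, smul_eq_mul, smul_eq_mul]
  obtain h | ⟨d, rfl⟩ := (lt_or_ge p i).imp_right Nat.exists_eq_add_of_le
  · simp [coeff_laguerrePoly_of_lt h]
  · have habsorb := genBinom_add_one_mul (i + d + α) d
    rw [coeff_laguerrePoly_add, coeff_laguerrePoly_add, ← add_assoc]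
    push_cast
    linear_combination (-1) ^ i / (i.factorial : ℝ) * habsorb

lemma add_one_smul_laguerrePoly_succ (p : ℕ) (α : ℝ) :
    ((p : ℝ) + 1) • laguerrePoly (p + 1) α
      = eulerDeriv ℝ (laguerrePoly p (α + 1)) + (α + 1) • laguerrePoly p (α + 1)
        - X * laguerrePoly p (α + 1) := by
  have heuler := eulerDeriv_laguerrePoly_add (p + 1) (α - 1)
  have hcontig := laguerrePoly_succ_sub p (α - 1)
  rw [sub_add_cancel] at heuler hcontig
  rw [eulerDeriv_apply, derivative_laguerrePoly_succ, ← hcontig, mul_neg] at heuler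
  rw [eulerDeriv_laguerrePoly_add]
  push_cast at heuler
  linear_combination (norm := module) -heuler

/-- Column operations turn the Hankel determinant defining `genLag` into a Wronskian. -/
lemma det_iterate_derivative_laguerrePoly (m n : ℕ) (α : ℝ) :
    (Matrix.of fun j l : Fin n => derivative^[(j : ℕ) + l] (laguerrePoly (m + n) α)).det
      = polyWronskian fun l : Fin n => laguerrePoly (m + 1 + l) (α + (n - 1)) := by
  let B (j l : Fin n) : ℝ[X] :=
    (derivative ^ (j : ℕ)) ((fwdDiff 1)^[l] (fun p => laguerrePoly p (α + (n - 1))) (m + 1))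
  have hentry (j l : Fin n) :
      derivative^[(j : ℕ) + l] (laguerrePoly (m + n) α) = (-1) ^ (l : ℕ) * B j l.rev := by
    have hl : (l.rev : ℕ) + l + 1 = n := by grind
    have hparam : α + (n - 1) - (l.rev : ℕ) = α + l := by
      rify at hl
      linear_combination -hl
    simp only [B, Module.End.pow_apply]
    rw [Function.iterate_add_apply, show m + n = m + 1 + l.rev + l by omega,
      iterate_derivative_laguerrePoly_add, fwdDiff_iter_laguerrePoly, hparam]
    obtain h | h := neg_one_pow_eq_or ℝ[X] (l : ℕ) <;>
      simp only [h, one_mul, neg_mul, iterate_derivative_neg]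
  calc (Matrix.of fun j l : Fin n => derivative^[(j : ℕ) + l] (laguerrePoly (m + n) α)).det
      = (Matrix.of fun l j : Fin n => B j l).det := by
        simp only [hentry]
        exact (det_neg_one_pow_mul_rev B).trans (Matrix.det_transpose B).symm
    _ = (Matrix.of fun l j : Fin n =>
          (derivative ^ (j : ℕ)) (laguerrePoly (m + 1 + l) (α + (n - 1)))).det :=
        det_addMonoidHom_fwdDiff_iter
          (fun j : Fin n => (derivative (R := ℝ) ^ (j : ℕ)).toAddMonoidHom) _ (m + 1)
    _ = polyWronskian fun l : Fin n => laguerrePoly (m + 1 + l) (α + (n - 1)) := by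
        simp only [Module.End.pow_apply]
        exact (Matrix.det_transpose _).symm

end Laguerre

section Hermite

open Polynomial

/-- The probabilists' Hermite polynomial with real coefficients. -/
def hermiteReal (n : ℕ) : ℝ[X] := (hermite n).map (Int.castRingHom ℝ)

lemma He_eq_eval_hermiteReal (n : ℕ) : He n = fun z => (hermiteReal n).eval z := by
  ext z
  simp [He, hermiteReal, aeval_def, eval_map]

lemma hermiteReal_succ (n : ℕ) :
    hermiteReal (n + 1) = X * hermiteReal n - derivative (hermiteReal n) := by
  simp [hermiteReal, hermite_succ, derivative_map]

lemma hermiteReal_two_mul (p : ℕ) :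
    hermiteReal (2 * p) = C ((-2 : ℝ) ^ p * p.factorial) * halfSq (laguerrePoly p (-1 / 2)) := by
  induction p with
  | zero => simp [hermiteReal, laguerrePoly, genBinom]
  | succ p ih =>
    set a : ℝ := (-2) ^ p * p.factorial with ha
    set L := laguerrePoly p (1 / 2)
    have hparam : (-1 / 2 + 1 : ℝ) = 1 / 2 := by norm_num
    have hodd : hermiteReal (2 * p + 1) = C a * (X * halfSq L) := by
      have hL : laguerrePoly p (-1 / 2) - derivative (laguerrePoly p (-1 / 2)) = L := by
        rw [laguerrePoly_sub_derivative, hparam]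
      rw [hermiteReal_succ, ih, derivative_C_mul, derivative_halfSq, ← hL, map_sub]
      ring
    have hsucc := congrArg halfSq (add_one_smul_laguerrePoly_succ p (-1 / 2))
    rw [hparam, eulerDeriv_apply] at hsucc
    simp only [map_sub, map_add, map_smul, map_mul, halfSq_X] at hsucc
    simp only [smul_eq_C_mul] at hsucc
    have hconst : C ((-2 : ℝ) ^ (p + 1) * (p + 1).factorial) = C (-2) * C a * C ((p : ℝ) + 1) := by
      rw [← C_mul, ← C_mul, ha, Nat.factorial_succ]
      push_cast
      ring_nf
    have hhalf : C (-2 : ℝ) * C (1 / 2) = -1 := by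
      rw [← C_mul]
      norm_num
    rw [mul_add_one, hermiteReal_succ, hodd, hconst, derivative_C_mul, derivative_mul,
      derivative_halfSq, derivative_X]
    linear_combination -C (-2) * C a * hsucc
      - C a * (X ^ 2 * (halfSq (derivative L) - halfSq L) + halfSq L) * hhalf

lemma eval_oddNodal_succ (M : ℕ) (x : ℝ) :
    (oddNodal (M + 1)).eval x = (x - (2 * M + 1)) * (oddNodal M).eval x := by
  simp only [oddNodal, Lagrange.eval_nodal, prod_range_succ_comm]

lemma aeval_oddNodal_hermiteReal_two_mul (M p : ℕ) :
    aeval (eulerDeriv ℝ) (oddNodal M) (hermiteReal (2 * p))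
      = C ((-2 : ℝ) ^ p * p.factorial * (oddNodal M).eval (2 * (p : ℝ)))
        * halfSq (laguerrePoly p (-1 / 2 - M)) := by
  induction M with
  | zero => simp [oddNodal, hermiteReal_two_mul]
  | succ M ih =>
    have heuler := congrArg halfSq (eulerDeriv_laguerrePoly_add p (-1 / 2 - (M + 1 : ℕ)))
    rw [show -1 / 2 - ((M + 1 : ℕ) : ℝ) + 1 = -1 / 2 - M by push_cast; ring] at heuler
    simp only [map_add, map_smul] at heuler
    rw [oddNodal, aeval_eulerDeriv_nodal_range_succ, ← oddNodal, ih, ← smul_eq_C_mul,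
      ← smul_eq_C_mul, map_smul, eulerDeriv_halfSq, map_smul, ← oddNodal, eval_oddNodal_succ]
    set a : ℝ := (-2 : ℝ) ^ p * p.factorial * (oddNodal M).eval (2 * (p : ℝ))
    push_cast at heuler ⊢
    linear_combination (norm := module) (2 * a) • heuler

lemma coeff_hermiteReal_eq_zero {i e : ℕ} (he : ∀ l ≤ i, e ≠ 2 * l + 1) :
    (hermiteReal (2 * i + 1)).coeff e = 0 := by
  rw [hermiteReal, coeff_map]
  obtain h | ⟨l, rfl⟩ := e.even_or_odd
  · rw [coeff_hermite_of_odd_add ((odd_two_mul_add_one i).add_even h), map_zero]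
  · rw [coeff_hermite_of_lt (by grind), map_zero]

lemma eval_oddNodal_eq_zero {l M : ℕ} (h : l < M) : (oddNodal M).eval (2 * (l : ℝ) + 1) = 0 :=
  Lagrange.eval_nodal_at_node (v := fun l : ℕ => 2 * (l : ℝ) + 1) (mem_range.mpr h)

lemma aeval_oddNodal_hermiteReal_eq_zero {i j : ℕ} (h : i < j) :
    aeval (eulerDeriv ℝ) (oddNodal j) (hermiteReal (2 * i + 1)) = 0 := by
  ext e
  rw [coeff_aeval_eulerDeriv, coeff_zero, mul_eq_zero]
  by_cases! he : ∀ l ≤ i, e ≠ 2 * l + 1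
  · exact .inr (coeff_hermiteReal_eq_zero he)
  · obtain ⟨l, hl, rfl⟩ := he
    exact .inl (mod_cast eval_oddNodal_eq_zero (hl.trans_lt h))

lemma aeval_oddNodal_hermiteReal_self (i : ℕ) :
    aeval (eulerDeriv ℝ) (oddNodal i) (hermiteReal (2 * i + 1))
      = C ((oddNodal i).eval (2 * (i : ℝ) + 1)) * X ^ (2 * i + 1) := by
  ext e
  rw [coeff_aeval_eulerDeriv, coeff_C_mul_X_pow]
  split_ifs with h
  · rw [h, hermiteReal, coeff_map, coeff_hermite_self]
    simp
  by_cases! he : ∀ l ≤ i, e ≠ 2 * l + 1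
  · rw [coeff_hermiteReal_eq_zero he, mul_zero]
  · obtain ⟨l, hl, rfl⟩ := he
    have hlt : l < i := hl.lt_of_ne fun hli => h (hli ▸ rfl)
    rw [show (oddNodal i).eval ((2 * l + 1 : ℕ) : ℝ) = 0 from
      mod_cast eval_oddNodal_eq_zero hlt, zero_mul]

lemma det_aeval_oddNodal_hermiteReal (M : ℕ) :
    (Matrix.of fun j i : Fin M =>
        aeval (eulerDeriv ℝ) (oddNodal j) (hermiteReal (2 * i + 1))).det
      = ∏ i : Fin M, C ((oddNodal i).eval (2 * (i : ℝ) + 1)) * X ^ (2 * (i : ℕ) + 1) := by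
  have htri : (Matrix.of fun j i : Fin M =>
      aeval (eulerDeriv ℝ) (oddNodal j) (hermiteReal (2 * i + 1))).IsUpperTriangular :=
    fun j i hij => aeval_oddNodal_hermiteReal_eq_zero (Fin.lt_def.mp hij)
  rw [Matrix.det_of_isUpperTriangular htri]
  exact Fintype.prod_congr _ _ fun i => aeval_oddNodal_hermiteReal_self i

lemma det_aeval_oddNodal_mul_evenNodal_hermiteReal (M : ℕ) {n : ℕ} (p : Fin n → ℕ) :
    (Matrix.of fun j l : Fin n =>
        aeval (eulerDeriv ℝ) (oddNodal M * evenNodal j) (hermiteReal (2 * p l))).det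
      = (∏ l, C ((-2 : ℝ) ^ p l * (p l).factorial * (oddNodal M).eval (2 * (p l : ℝ)))) *
        ((∏ j : Fin n, X ^ (2 * (j : ℕ))) *
          halfSq (polyWronskian fun l => laguerrePoly (p l) (-1 / 2 - M))) := by
  let c (l : Fin n) : ℝ := (-2) ^ p l * (p l).factorial * (oddNodal M).eval (2 * (p l : ℝ))
  let B : Matrix (Fin n) (Fin n) ℝ[X] :=
    Matrix.of fun j l => derivative^[j] (laguerrePoly (p l) (-1 / 2 - M))
  have hentry (j l : Fin n) :
      aeval (eulerDeriv ℝ) (oddNodal M * evenNodal j) (hermiteReal (2 * p l))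
        = C (c l) * (X ^ (2 * (j : ℕ)) * halfSq.mapMatrix B j l) := by
    rw [mul_comm, map_mul, Module.End.mul_apply, aeval_oddNodal_hermiteReal_two_mul, C_mul',
      map_smul, aeval_evenNodal_halfSq, C_mul']
    rfl
  simp only [hentry]
  have hrow := Matrix.det_mul_row (fun l => C (c l))
    (Matrix.of fun j l : Fin n => X ^ (2 * (j : ℕ)) * halfSq.mapMatrix B j l)
  have hcolumn := Matrix.det_mul_column (fun j : Fin n => X ^ (2 * (j : ℕ))) (halfSq.mapMatrix B)
  rw [hcolumn, ← AlgHom.map_det] at hrow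
  exact hrow

/-- The powers of `X` released by the triangular odd block and by the substitution `X²/2` in the
even block, compared with those of the full Wronskian. -/
lemma prod_X_pow_odd_mul_prod_X_pow_even {M n t : ℕ} {k : ℤ} (hM : (M : ℤ) = n + k)
    (ht : 2 * (t : ℤ) = k * (k + 1)) :
    (∏ i : Fin M, (X : ℝ[X]) ^ (2 * (i : ℕ) + 1)) * ∏ j : Fin n, X ^ (2 * (j : ℕ))
      = (∏ i : Fin (M + n), X ^ (i : ℕ)) * X ^ t := by
  have hid (N : ℕ) : 2 * ∑ i ∈ range N, (i : ℤ) = N * (N - 1) := by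
    induction N with
    | zero => rfl
    | succ N ih =>
      rw [sum_range_succ, mul_add, ih]
      push_cast
      ring
  have hexp : ∑ i ∈ range M, (2 * i + 1) + ∑ i ∈ range n, 2 * i = ∑ i ∈ range (M + n), i + t := by
    have hsum := hid (M + n)
    zify
    simp only [sum_add_distrib, ← mul_sum, hid, sum_const, card_range, nsmul_one]
    push_cast at hsum ⊢
    obtain rfl : k = M - n := by linarith
    linarith
  simp only [prod_pow_eq_pow_sum, ← pow_add, Fin.sum_univ_eq_sum_range fun i => 2 * i + 1,
    Fin.sum_univ_eq_sum_range fun i => 2 * i, Fin.sum_univ_eq_sum_range fun i => i, hexp]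

/-- Nodes `1, 3, …, 2M - 1` followed by `0, 2, …, 2n - 2`, added one at a time: the polynomials in
`X d/dX` that replace the rows of a Wronskian of `M` odd and `n` even Hermite polynomials. -/
def oddEvenNodal (M n : ℕ) : Fin (M + n) → ℝ[X] :=
  Fin.append (fun i : Fin M => oddNodal i) fun j : Fin n => oddNodal M * evenNodal j

lemma monic_oddEvenNodal (M n : ℕ) (j : Fin (M + n)) : (oddEvenNodal M n j).Monic := by
  refine Fin.addCases (fun i => ?_) (fun i => ?_) j
  · rw [oddEvenNodal, Fin.append_left]
    exact Lagrange.nodal_monic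
  · rw [oddEvenNodal, Fin.append_right]
    exact Lagrange.nodal_monic.mul Lagrange.nodal_monic

lemma natDegree_oddEvenNodal (M n : ℕ) (j : Fin (M + n)) : (oddEvenNodal M n j).natDegree = j := by
  refine Fin.addCases (fun i => ?_) (fun i => ?_) j
  · simp [oddEvenNodal, oddNodal]
  · rw [oddEvenNodal, Fin.append_right, oddNodal, evenNodal,
      Lagrange.nodal_monic.natDegree_mul Lagrange.nodal_monic]
    simp

lemma det_aeval_oddEvenNodal_hermiteReal (M : ℕ) {n : ℕ} (p : Fin n → ℕ) :
    (Matrix.of fun j i => aeval (eulerDeriv ℝ) (oddEvenNodal M n j)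
        (Fin.append (fun i : Fin M => hermiteReal (2 * i + 1))
          (fun l => hermiteReal (2 * p l)) i)).det
      = (Matrix.of fun j i : Fin M =>
          aeval (eulerDeriv ℝ) (oddNodal j) (hermiteReal (2 * i + 1))).det *
        (Matrix.of fun j l : Fin n =>
          aeval (eulerDeriv ℝ) (oddNodal M * evenNodal j) (hermiteReal (2 * p l))).det := by
  rw [det_eq_mul_of_natAdd_castAdd_eq_zero]
  · congr 2 <;> ext1 j i <;> simp [oddEvenNodal]
  · intro j i
    simp only [oddEvenNodal, Matrix.of_apply, Fin.append_left, Fin.append_right]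
    rw [mul_comm, map_mul, Module.End.mul_apply, aeval_oddNodal_hermiteReal_eq_zero i.isLt,
      map_zero]

lemma polyWronskian_hermiteReal {M n t : ℕ} {k : ℤ} (hM : (M : ℤ) = n + k)
    (ht : 2 * (t : ℤ) = k * (k + 1)) (p : Fin n → ℕ) :
    polyWronskian (Fin.append (fun i : Fin M => hermiteReal (2 * i + 1))
        fun l => hermiteReal (2 * p l))
      = C ((∏ i : Fin M, (oddNodal i).eval (2 * (i : ℝ) + 1)) *
          ∏ l, (-2 : ℝ) ^ p l * (p l).factorial * (oddNodal M).eval (2 * (p l : ℝ))) *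
        (X ^ t * halfSq (polyWronskian fun l => laguerrePoly (p l) (-1 / 2 - M))) := by
  have hX : (∏ i : Fin (M + n), (X : ℝ[X]) ^ (i : ℕ)) ≠ 0 :=
    prod_ne_zero_iff.mpr fun i _ => pow_ne_zero _ X_ne_zero
  refine mul_left_cancel₀ hX ?_
  rw [← det_aeval_eulerDeriv (oddEvenNodal M n) (natDegree_oddEvenNodal M n)
      (monic_oddEvenNodal M n), det_aeval_oddEvenNodal_hermiteReal, det_aeval_oddNodal_hermiteReal,
    det_aeval_oddNodal_mul_evenNodal_hermiteReal, prod_mul_distrib, C_mul, map_prod, map_prod]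
  linear_combination (∏ i : Fin M, C ((oddNodal i).eval (2 * (i : ℝ) + 1))) *
    (∏ l, C ((-2 : ℝ) ^ p l * (p l).factorial * (oddNodal M).eval (2 * (p l : ℝ)))) *
    halfSq (polyWronskian fun l => laguerrePoly (p l) (-1 / 2 - M)) *
    prod_X_pow_odd_mul_prod_X_pow_even hM ht

end Hermite


section Constants

open Polynomial

lemma eval_oddNodal_two_mul_ne_zero (M p : ℕ) : (oddNodal M).eval (2 * (p : ℝ)) ≠ 0 := by
  refine Lagrange.eval_nodal_not_at_node fun l _ => ?_
  norm_cast
  omega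

lemma eval_oddNodal_two_mul_add_one_ne_zero (i : ℕ) :
    (oddNodal i).eval (2 * (i : ℝ) + 1) ≠ 0 := by
  refine Lagrange.eval_nodal_not_at_node fun l hl => ?_
  have := mem_range.mp hl
  norm_cast
  omega

lemma prod_range_two_mul_sub_two_mul (a l : ℕ) :
    ∏ i ∈ range l, (2 * ((a + l : ℕ) : ℝ) - 2 * ((a + i : ℕ) : ℝ)) = 2 ^ l * l.factorial := by
  have hterm (i : ℕ) (hi : i ∈ range l) :
      2 * ((a + l : ℕ) : ℝ) - 2 * ((a + i : ℕ) : ℝ) = 2 * ((l - 1 - i + 1 : ℕ) : ℝ) := by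
    rw [show l - 1 - i + 1 = l - i by grind, Nat.cast_sub (mem_range.mp hi).le]
    push_cast
    ring
  rw [prod_congr rfl hterm, prod_mul_distrib, prod_const, card_range, ← Nat.cast_prod,
    prod_range_reflect (fun i => i + 1), prod_range_add_one_eq_factorial]

lemma prod_filter_sub_hermite_degrees {m M : ℕ} {h : ℕ → ℕ} (n : ℕ)
    (hodd : ∀ i < M, h i = 2 * i + 1) (heven : ∀ l, h (M + l) = 2 * (m + 1 + l)) :
    ∏ p ∈ univ.filter (fun p : Fin (M + n) × Fin (M + n) => p.1 < p.2),
        ((h p.2 : ℝ) - (h p.1 : ℝ))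
      = (∏ i : Fin M, (oddNodal i).eval (2 * (i : ℝ) + 1)) *
        ∏ l : Fin n, (oddNodal M).eval (2 * ((m + 1 + l : ℕ) : ℝ)) *
          (2 ^ (l : ℕ) * (l : ℕ).factorial) := by
  rw [prod_filter_fst_lt_snd (M + n) fun i j => (h j : ℝ) - h i, prod_range_add,
    Fin.prod_univ_eq_prod_range fun i => (oddNodal i).eval (2 * (i : ℝ) + 1),
    Fin.prod_univ_eq_prod_range fun l => (oddNodal M).eval (2 * ((m + 1 + l : ℕ) : ℝ)) *
      (2 ^ l * l.factorial : ℝ)]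
  have hnodal (x : ℝ) (j : ℕ) (hj : j ≤ M) :
      ∏ i ∈ range j, (x - h i) = (oddNodal j).eval x := by
    rw [oddNodal, Lagrange.eval_nodal]
    refine prod_congr rfl fun i hi => ?_
    rw [hodd i ((mem_range.mp hi).trans_le hj)]
    push_cast
    rfl
  congr 1
  · refine prod_congr rfl fun j hj => ?_
    rw [hnodal _ j (mem_range.mp hj).le, hodd j (mem_range.mp hj)]
    push_cast
    rfl
  · refine prod_congr rfl fun l _ => ?_
    rw [prod_range_add, hnodal _ M le_rfl, ← prod_range_two_mul_sub_two_mul (m + 1)]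
    simp only [heven, Nat.cast_mul, Nat.cast_ofNat]

lemma neg_one_pow_mul_prod_neg_two_pow (m n : ℕ) :
    (-1 : ℝ) ^ (n * (2 * m + 1 + n) / 2) * ∏ l ∈ range n, (-2 : ℝ) ^ (m + 1 + l)
      = 2 ^ (n * (m + 1)) * ∏ l ∈ range n, 2 ^ l := by
  have hsum : n * (2 * m + 1 + n) = 2 * ∑ l ∈ range n, (m + 1 + l) := by
    induction n with
    | zero => simp
    | succ n ih =>
      rw [sum_range_succ, mul_add 2, ← ih]
      ring
  have hterm (l : ℕ) : (-1 : ℝ) ^ (m + 1 + l) * (-2) ^ (m + 1 + l) = 2 ^ (m + 1) * 2 ^ l := by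
    rw [← mul_pow, neg_mul_neg, one_mul, pow_add]
  rw [hsum, Nat.mul_div_cancel_left _ two_pos, ← prod_pow_eq_pow_sum, ← prod_mul_distrib,
    prod_congr rfl fun l _ => hterm l, prod_mul_distrib, prod_const, card_range, ← pow_mul,
    mul_comm n]

lemma cmn_mul_prod (m n : ℕ) :
    ((2 : ℝ) ^ (n * (m + 1)))⁻¹ * cmn m n *
        ∏ l : Fin n, (-2 : ℝ) ^ (m + 1 + l : ℕ) * (m + 1 + l : ℕ).factorial
      = ∏ l : Fin n, 2 ^ (l : ℕ) * ((l : ℕ).factorial : ℝ) := by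
  rw [Fin.prod_univ_eq_prod_range fun l => (-2 : ℝ) ^ (m + 1 + l) * (m + 1 + l).factorial,
    Fin.prod_univ_eq_prod_range fun l => (2 : ℝ) ^ l * l.factorial, cmn, prod_mul_distrib,
    prod_mul_distrib, prod_div_distrib]
  simp only [add_right_comm m _ 1]
  have hfac : ∏ l ∈ range n, ((m + 1 + l).factorial : ℝ) ≠ 0 :=
    prod_ne_zero_iff.mpr fun l _ => by positivity
  field_simp
  linear_combination neg_one_pow_mul_prod_neg_two_pow m n

lemma cmn_div_prod_mul_eq_one {m M : ℕ} {h : ℕ → ℕ} (n : ℕ)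
    (hodd : ∀ i < M, h i = 2 * i + 1) (heven : ∀ l, h (M + l) = 2 * (m + 1 + l)) :
    ((2 : ℝ) ^ (n * (m + 1)))⁻¹ * cmn m n /
          (∏ p ∈ univ.filter (fun p : Fin (M + n) × Fin (M + n) => p.1 < p.2),
            ((h p.2 : ℝ) - (h p.1 : ℝ))) *
        ((∏ i : Fin M, (oddNodal i).eval (2 * (i : ℝ) + 1)) *
          ∏ l : Fin n, (-2 : ℝ) ^ (m + 1 + l : ℕ) * (m + 1 + l : ℕ).factorial *
            (oddNodal M).eval (2 * ((m + 1 + l : ℕ) : ℝ))) = 1 := by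
  have hA : ∏ i : Fin M, (oddNodal i).eval (2 * (i : ℝ) + 1) ≠ 0 :=
    prod_ne_zero_iff.mpr fun i _ => eval_oddNodal_two_mul_add_one_ne_zero i
  have hQ : ∏ l : Fin n, (oddNodal M).eval (2 * ((m + 1 + l : ℕ) : ℝ)) ≠ 0 :=
    prod_ne_zero_iff.mpr fun l _ => eval_oddNodal_two_mul_ne_zero M _
  have hF : ∏ l : Fin n, 2 ^ (l : ℕ) * ((l : ℕ).factorial : ℝ) ≠ 0 :=
    prod_ne_zero_iff.mpr fun l _ => by positivity
  rw [prod_filter_sub_hermite_degrees n hodd heven, prod_mul_distrib (s := univ (α := Fin n)),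
    prod_mul_distrib (f := fun l : Fin n => (-2 : ℝ) ^ (m + 1 + l : ℕ) * _), div_mul_eq_mul_div,
    div_eq_one_iff_eq (mul_ne_zero hA (mul_ne_zero hQ hF)), ← cmn_mul_prod m n]
  ring

end Constants

section Evaluation

open scoped Polynomial

lemma iteratedDeriv_eval (f : ℝ[X]) (j : ℕ) :
    iteratedDeriv j (fun z => f.eval z) = fun z => (Polynomial.derivative^[j] f).eval z := by
  induction j with
  | zero => simp
  | succ j ih =>
    ext z
    rw [iteratedDeriv_succ, ih, Polynomial.deriv, Function.iterate_succ_apply']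

lemma wronskian_eval {r : ℕ} (f : Fin r → ℝ[X]) (z : ℝ) :
    wronskian (fun i z => (f i).eval z) z = (polyWronskian f).eval z := by
  simp only [wronskian, iteratedDeriv_eval]
  exact ((Polynomial.evalRingHom z).map_det _).symm

lemma genLag_natCast (m n : ℕ) (μ x : ℝ) :
    genLag m n μ x
      = (polyWronskian fun l : Fin n => laguerrePoly (m + 1 + l) (μ + n)).eval x := by
  have hparam : μ + 1 + (n - 1) = μ + n := by ring
  rw [← hparam, ← det_iterate_derivative_laguerrePoly]
  simp only [genLag, ← Nat.cast_add, lagL_natCast, iteratedDeriv_eval]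
  exact ((Polynomial.evalRingHom x).map_det _).symm

end Evaluation

lemma exists_two_mul_natCast_eq_mul_add_one (k : ℤ) : ∃ t : ℕ, 2 * (t : ℤ) = k * (k + 1) := by
  obtain ⟨t, ht⟩ := Int.even_mul_succ_self k
  have ht₀ : 0 ≤ t := by nlinarith [sq_nonneg (2 * k + 1)]
  lift t to ℕ using ht₀
  exact ⟨t, by rw [ht, two_mul]⟩

theorem genLag_half_integer_hermite_general (m n M : ℕ) (k : ℤ) (hM : (M : ℤ) = n + k)
    (hd : ℕ → ℕ) (hhd : hd = fun i => if i < M then 2 * i + 1 else 2 * (m + 1 + (i - M))) (z : ℝ) :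
    z ^ (k * (k + 1) / 2) * genLag (m : ℤ) n (-2 * (n : ℝ) - k - 1 / 2) (z ^ 2 / 2)
      = (((2 : ℝ) ^ (n * (m + 1)))⁻¹ * cmn m n /
            ∏ p ∈ Finset.univ.filter (fun p : Fin (M + n) × Fin (M + n) => p.1 < p.2),
              ((hd (p.2 : ℕ) : ℝ) - (hd (p.1 : ℕ) : ℝ))) *
          wronskian (fun i : Fin (M + n) => He (hd (i : ℕ))) z := by
  obtain ⟨t, ht⟩ := exists_two_mul_natCast_eq_mul_add_one k
  have hodd (i : ℕ) (hi : i < M) : hd i = 2 * i + 1 := by simp [hhd, hi]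
  have heven (l : ℕ) : hd (M + l) = 2 * (m + 1 + l) := by simp [hhd]
  have hfamily : (fun i : Fin (M + n) => hermiteReal (hd i)) = Fin.append
      (fun i : Fin M => hermiteReal (2 * i + 1))
      fun l : Fin n => hermiteReal (2 * (m + 1 + l)) := by
    ext1 i
    refine Fin.addCases (fun i => ?_) (fun l => ?_) i
    · simp [hodd]
    · simp [heven]
  have hparam : -2 * (n : ℝ) - k - 1 / 2 + n = -1 / 2 - M := by
    rify at hM
    linear_combination hM
  have hexponent : k * (k + 1) / 2 = t := by lia
  simp only [He_eq_eval_hermiteReal]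
  rw [wronskian_eval, hfamily, polyWronskian_hermiteReal hM ht, genLag_natCast, hparam, hexponent,
    zpow_natCast, Polynomial.eval_mul, Polynomial.eval_C, ← mul_assoc,
    cmn_div_prod_mul_eq_one n hodd heven, one_mul, Polynomial.eval_mul, Polynomial.eval_pow,
    Polynomial.eval_X, eval_halfSq]

/-- `T_{m,n}^{(-2n-k-1/2)}(z²/2)` as a Wronskian of Hermite polynomials. -/
theorem genLag_half_integer_hermite (m n k : ℕ) (hn : 1 ≤ n) (hd : ℕ → ℕ)
    (hhd : hd = fun i => if i < n + k then 2 * i + 1 else 2 * (m + 1 + (i - (n + k)))) :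
    ∀ z : ℝ,
      z ^ (k * (k + 1) / 2) *
          genLag (m : ℤ) n (-2 * (n : ℝ) - k - 1 / 2) (z ^ 2 / 2)
        = (((2 : ℝ) ^ (n * (m + 1)))⁻¹ * cmn m n /
              ∏ p ∈ Finset.univ.filter
                  (fun p : Fin (n + k + n) × Fin (n + k + n) => p.1 < p.2),
                ((hd (p.2 : ℕ) : ℝ) - (hd (p.1 : ℕ) : ℝ))) *
            wronskian (fun i : Fin (n + k + n) => He (hd (i : ℕ))) z := by
  exact fun z => mod_cast genLag_half_integer_hermite_general m n (n + k) k (by simp) hd hhd z
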